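/- Let c_{n,m}(u) be the number of words w of length n with entries at most m such that uw is Knuth-equivalent to wu. If u is a single positive integer, then c_{n,m}(u) = c_{n,m}(1) when u ≤ m, and c_{n,m}(u) = 1 if n = 0 and 0 otherwise when u > m. -/

import Mathlib

namespace Plactic

/-- Insert `x` into a weakly increasing row, returning the new row and the bumped entry. -/
def rowInsert (x : ℕ) : List ℕ → List ℕ × Option ℕ
  | [] => ([x], none)
  | y :: ys =>
    if x < y then (x :: ys, some y)
    else
      let p := rowInsert x ys
      (y :: p.1, p.2)

/-- RSK insertion of `x` into a tableau given as a list of rows. -/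
def tInsert (x : ℕ) : List (List ℕ) → List (List ℕ)
  | [] => [[x]]
  | r :: rs =>
    match rowInsert x r with
    | (r', none) => r' :: rs
    | (r', some y) => r' :: tInsert y rs

/-- The RSK insertion tableau of a word. -/
def P (w : List ℕ) : List (List ℕ) := w.foldl (fun t x => tInsert x t) []

/-- The `i`-th row (0-indexed) of the insertion tableau of `w`. -/
def row (w : List ℕ) (i : ℕ) : List ℕ := (P w).getD i []

/-- The `j`-th column (0-indexed) of a tableau, read top to bottom. -/
def col (T : List (List ℕ)) (j : ℕ) : List ℕ := T.filterMap (fun r => r[j]?)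

/-- An elementary Knuth transposition. -/
inductive KStep : List ℕ → List ℕ → Prop
  | k1 (x y : List ℕ) (a b c : ℕ) : a ≤ b → b < c →
      KStep (x ++ [a, c, b] ++ y) (x ++ [c, a, b] ++ y)
  | k2 (x y : List ℕ) (a b c : ℕ) : a < b → b ≤ c →
      KStep (x ++ [b, a, c] ++ y) (x ++ [b, c, a] ++ y)

/-- Knuth equivalence: the equivalence relation generated by Knuth transpositions. -/
def KEquiv : List ℕ → List ℕ → Prop := Relation.EqvGen KStep

/-- The centralizer of `u` in the plactic monoid. -/
def Cent (u : List ℕ) : Set (List ℕ) := {w | KEquiv (u ++ w) (w ++ u)}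

end Plactic

namespace Plactic

/-- The number of words of length `n` with positive entries at most `m`
lying in the centralizer of `u`. -/
noncomputable def c (n m : ℕ) (u : List ℕ) : ℕ :=
  {w : List ℕ | w ∈ Cent u ∧ w.length = n ∧ ∀ x ∈ w, 1 ≤ x ∧ x ≤ m}.ncard

end Plactic

namespace Plactic

/-- Every weakly increasing subsequence of `w` has length at most `k`. -/
def IncBound (w : List ℕ) (k : ℕ) : Prop :=
  ∀ s : List ℕ, s.Sublist w → s.Pairwise (· ≤ ·) → s.length ≤ k

theorem KEquiv.refl (w : List ℕ) : KEquiv w w := Relation.EqvGen.refl w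

theorem KEquiv.symm {v w : List ℕ} (h : KEquiv v w) : KEquiv w v := Relation.EqvGen.symm _ _ h

theorem KEquiv.trans {u v w : List ℕ} (h : KEquiv u v) (h' : KEquiv v w) : KEquiv u w :=
  Relation.EqvGen.trans _ _ _ h h'

theorem KStep.append_append {v w : List ℕ} (h : KStep v w) (p q : List ℕ) :
    KStep (p ++ v ++ q) (p ++ w ++ q) := by
  cases h with
  | k1 x y a b c hab hbc => simpa using KStep.k1 (p ++ x) (y ++ q) a b c hab hbc
  | k2 x y a b c hab hbc => simpa using KStep.k2 (p ++ x) (y ++ q) a b c hab hbc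

theorem KEquiv.append_append {v w : List ℕ} (h : KEquiv v w) (p q : List ℕ) :
    KEquiv (p ++ v ++ q) (p ++ w ++ q) := by
  induction h with
  | rel _ _ h => exact Relation.EqvGen.rel _ _ (h.append_append p q)
  | refl _ => exact KEquiv.refl _
  | symm _ _ _ ih => exact ih.symm
  | trans _ _ _ _ _ ihv ihw => exact ihv.trans ihw

theorem KEquiv.append_left {v w : List ℕ} (h : KEquiv v w) (p : List ℕ) :
    KEquiv (p ++ v) (p ++ w) := by
  simpa using h.append_append p []

theorem KEquiv.append_right {v w : List ℕ} (h : KEquiv v w) (q : List ℕ) :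
    KEquiv (v ++ q) (w ++ q) := by
  simpa using h.append_append [] q

theorem KEquiv.perm {v w : List ℕ} (h : KEquiv v w) : v.Perm w := by
  induction h with
  | rel _ _ h =>
    cases h with
    | k1 x y a b c _ _ => exact ((List.Perm.swap c a [b]).append_left x).append_right y
    | k2 x y a b c _ _ => exact (((List.Perm.swap c a []).cons b).append_left x).append_right y
  | refl _ => exact List.Perm.refl _
  | symm _ _ _ ih => exact ih.symm
  | trans _ _ _ _ _ ihv ihw => exact ihv.trans ihw

/-- The word `w` has a weakly increasing subsequence of length `k` with entries in `S`. -/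
def HasInc (S : Set ℕ) (k : ℕ) (w : List ℕ) : Prop :=
  ∃ s : List ℕ, s.Sublist w ∧ s.Pairwise (· ≤ ·) ∧ (∀ x ∈ s, x ∈ S) ∧ s.length = k

theorem HasInc.of_replace {S : Set ℕ} {k : ℕ} {x y v v' : List ℕ}
    (hv : ∀ s : List ℕ, s.Sublist v → s.Pairwise (· ≤ ·) → (∀ z ∈ s, z ∈ S) →
      ∃ s' : List ℕ, s'.Sublist v' ∧ s'.Pairwise (· ≤ ·) ∧ (∀ z ∈ s', z ∈ S) ∧
        s'.length = s.length ∧ (∀ l, (∀ z ∈ s, l ≤ z) → ∀ z ∈ s', l ≤ z) ∧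
        (∀ l, (∀ z ∈ s, z ≤ l) → ∀ z ∈ s', z ≤ l))
    (h : HasInc S k (x ++ v ++ y)) : HasInc S k (x ++ v' ++ y) := by
  obtain ⟨s, hs, hp, hS, rfl⟩ := h
  obtain ⟨s₁₂, s₃, rfl, h₁₂, h₃⟩ := List.sublist_append_iff.1 hs
  obtain ⟨s₁, s₂, rfl, h₁, h₂⟩ := List.sublist_append_iff.1 h₁₂
  simp only [List.pairwise_append, List.mem_append] at hp hS
  obtain ⟨s', hs', hp', hS', hl, hlo, hhi⟩ := hv s₂ h₂ hp.1.2.1 (fun z hz => hS z (by simp [hz]))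
  refine ⟨s₁ ++ s' ++ s₃, (h₁.append hs').append h₃, ?_, ?_, by simp [hl]⟩
  · simp only [List.pairwise_append, List.mem_append]
    refine ⟨⟨hp.1.1, hp', fun a ha => hlo a (hp.1.2.2 a ha)⟩, hp.2.1, ?_⟩
    rintro a (ha | ha) b hb
    · exact hp.2.2 a (Or.inl ha) b hb
    · exact hhi b (fun z hz => hp.2.2 z (Or.inr hz) b hb) a ha
  · simp only [List.mem_append]
    rintro z ((hz | hz) | hz)
    · exact hS z (by simp [hz])
    · exact hS' z hz
    · exact hS z (by simp [hz])

theorem sublist_three {s : List ℕ} {a b c : ℕ} (h : s.Sublist [a, b, c]) :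
    s = [] ∨ s = [a] ∨ s = [b] ∨ s = [c] ∨ s = [a, b] ∨ s = [a, c] ∨ s = [b, c] ∨
      s = [a, b, c] := by
  rw [← List.mem_sublists] at h
  simp [List.sublists, List.foldr] at h
  tauto

theorem KStep.hasInc_iff {S : Set ℕ} [hS : S.OrdConnected] {k : ℕ} {v w : List ℕ}
    (h : KStep v w) : HasInc S k v ↔ HasInc S k w := by
  cases h with
  | k1 x y a b c hab hbc =>
    constructor <;> refine HasInc.of_replace fun s hs hp hm => ?_
    · rcases sublist_three hs with rfl | rfl | rfl | rfl | rfl | rfl | rfl | rfl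
      case inr.inr.inr.inr.inl =>
        have hb : b ∈ S := hS.out (hm a (by simp)) (hm c (by simp)) ⟨hab, hbc.le⟩
        have ha : a ∈ S := hm a (by simp)
        exact ⟨[a, b], by simp, by simpa using hab, by simp [ha, hb], rfl,
          by simp; omega, by simp; omega⟩
      all_goals first
        | (simp at hp; omega)
        | exact ⟨_, by simp, hp, hm, rfl, fun _ h => h, fun _ h => h⟩
    · rcases sublist_three hs with rfl | rfl | rfl | rfl | rfl | rfl | rfl | rfl
      all_goals first
        | (simp at hp; omega)
        | exact ⟨_, by simp, hp, hm, rfl, fun _ h => h, fun _ h => h⟩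
  | k2 x y a b c hab hbc =>
    constructor <;> refine HasInc.of_replace fun s hs hp hm => ?_
    · rcases sublist_three hs with rfl | rfl | rfl | rfl | rfl | rfl | rfl | rfl
      case inr.inr.inr.inr.inr.inr.inl =>
        have hb : b ∈ S := hS.out (hm a (by simp)) (hm c (by simp)) ⟨hab.le, hbc⟩
        have hc : c ∈ S := hm c (by simp)
        exact ⟨[b, c], by simp, by simpa using hbc, by simp [hc, hb], rfl,
          by simp; omega, by simp; omega⟩
      all_goals first
        | (simp at hp; omega)
        | exact ⟨_, by simp, hp, hm, rfl, fun _ h => h, fun _ h => h⟩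
    · rcases sublist_three hs with rfl | rfl | rfl | rfl | rfl | rfl | rfl | rfl
      all_goals first
        | (simp at hp; omega)
        | exact ⟨_, by simp, hp, hm, rfl, fun _ h => h, fun _ h => h⟩

theorem KEquiv.hasInc_iff {S : Set ℕ} [S.OrdConnected] {k : ℕ} {v w : List ℕ}
    (h : KEquiv v w) : HasInc S k v ↔ HasInc S k w := by
  induction h with
  | rel _ _ h => exact h.hasInc_iff
  | refl _ => exact Iff.rfl
  | symm _ _ _ ih => exact ih.symm
  | trans _ _ _ _ _ ihv ihw => exact ihv.trans ihw

/-- If `u` commutes with `w`, increasing subsequences with entries at most `u` are bounded by the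
multiplicity of `u`. -/
theorem length_le_count_of_le {u : ℕ} {w s : List ℕ} (h : w ∈ Cent [u]) (hs : s.Sublist w)
    (hp : s.Pairwise (· ≤ ·)) (hu : ∀ x ∈ s, x ≤ u) : s.length ≤ w.count u := by
  by_contra! hlt
  obtain ⟨N, hN, hmax⟩ : ∃ N, HasInc (Set.Iic u) N w ∧ ∀ k, HasInc (Set.Iic u) k w → k ≤ N := by
    have hbdd : ∀ k, HasInc (Set.Iic u) k w → k ≤ w.length := by
      rintro k ⟨t, ht, -, -, rfl⟩
      exact ht.length_le
    classical
    exact ⟨Nat.findGreatest (fun k => HasInc (Set.Iic u) k w) w.length,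
      Nat.findGreatest_spec (P := fun k => HasInc (Set.Iic u) k w) hs.length_le
        ⟨s, hs, hp, hu, rfl⟩, fun k hk => Nat.le_findGreatest (hbdd k hk) hk⟩
  have hsN : s.length ≤ N := hmax _ ⟨s, hs, hp, hu, rfl⟩
  have hN' : HasInc (Set.Iic u) (N + 1) (w ++ [u]) := by
    obtain ⟨t, ht, htp, htu, rfl⟩ := hN
    refine ⟨t ++ [u], ht.append (List.Sublist.refl _), ?_, ?_, by simp⟩
    · simp only [List.pairwise_append]
      simpa [htp] using htu
    · simp only [List.mem_append, List.mem_singleton]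
      rintro x (hx | rfl)
      · exact htu x hx
      · simp
  have h' : KEquiv ([u] ++ w) (w ++ [u]) := h
  obtain ⟨t, ht, htp, htu, htl⟩ := h'.hasInc_iff.2 hN'
  rcases List.sublist_cons_iff.1 ht with ht | ⟨r, rfl, hr⟩
  · have := hmax _ ⟨t, ht, htp, htu, rfl⟩
    omega
  · rw [List.pairwise_cons] at htp
    have hru : r.count u = r.length := by
      rw [List.count_eq_length]
      exact fun b hb => le_antisymm (htp.1 b hb) (htu b (by simp [hb]))
    have : r.count u ≤ w.count u := hr.count_le u
    simp at htl
    omega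

/-- If `u` commutes with `w`, increasing subsequences with entries at least `u` are bounded by the
multiplicity of `u`. -/
theorem length_le_count_of_ge {u : ℕ} {w s : List ℕ} (h : w ∈ Cent [u]) (hs : s.Sublist w)
    (hp : s.Pairwise (· ≤ ·)) (hu : ∀ x ∈ s, u ≤ x) : s.length ≤ w.count u := by
  by_contra! hlt
  obtain ⟨N, hN, hmax⟩ : ∃ N, HasInc (Set.Ici u) N w ∧ ∀ k, HasInc (Set.Ici u) k w → k ≤ N := by
    have hbdd : ∀ k, HasInc (Set.Ici u) k w → k ≤ w.length := by
      rintro k ⟨t, ht, -, -, rfl⟩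
      exact ht.length_le
    classical
    exact ⟨Nat.findGreatest (fun k => HasInc (Set.Ici u) k w) w.length,
      Nat.findGreatest_spec (P := fun k => HasInc (Set.Ici u) k w) hs.length_le
        ⟨s, hs, hp, hu, rfl⟩, fun k hk => Nat.le_findGreatest (hbdd k hk) hk⟩
  have hsN : s.length ≤ N := hmax _ ⟨s, hs, hp, hu, rfl⟩
  have hN' : HasInc (Set.Ici u) (N + 1) ([u] ++ w) := by
    obtain ⟨t, ht, htp, htu, rfl⟩ := hN
    refine ⟨u :: t, ht.cons_cons u, List.pairwise_cons.2 ⟨htu, htp⟩, ?_, by simp⟩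
    simp only [List.mem_cons]
    rintro x (rfl | hx)
    · simp
    · exact htu x hx
  have h' : KEquiv ([u] ++ w) (w ++ [u]) := h
  obtain ⟨t, ht, htp, htu, htl⟩ := h'.hasInc_iff.1 hN'
  obtain ⟨r, q, rfl, hr, hq⟩ := List.sublist_append_iff.1 ht
  rcases List.sublist_singleton.1 hq with rfl | rfl
  · have := hmax _ ⟨r, hr, by simpa using htp, by simpa using htu, rfl⟩
    simp at htl
    omega
  · rw [List.pairwise_append] at htp
    have hru : r.count u = r.length := by
      rw [List.count_eq_length]
      exact fun b hb => le_antisymm (htu b (by simp [hb])) (htp.2.2 b hb u (by simp))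
    have := hr.count_le u
    simp at htl
    omega

theorem eq_filter_lt_append_filter_le {s : List ℕ} (hs : s.Pairwise (· ≤ ·)) (a : ℕ) :
    s = s.filter (· < a) ++ s.filter (a ≤ ·) := by
  induction s with
  | nil => rfl
  | cons x t ih =>
    rw [List.pairwise_cons] at hs
    by_cases hx : x < a
    · simp only [List.filter_cons, hx, decide_true, if_true, not_le.2 hx, decide_false,
        List.cons_append]
      simpa using ih hs.2
    · have h₁ : t.filter (· < a) = [] := by
        simp only [List.filter_eq_nil_iff, decide_eq_true_eq]
        intro y hy
        have := hs.1 y hy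
        omega
      have h₂ : t.filter (a ≤ ·) = t := by
        simp only [List.filter_eq_self, decide_eq_true_eq]
        intro y hy
        have := hs.1 y hy
        omega
      simp [hx, not_lt.1 hx, h₁, h₂]

/-- A weakly increasing subsequence of `w` splits at a band of consecutive values. -/
theorem exists_split_of_sublist {s w : List ℕ} (hs : s.Sublist w) (hp : s.Pairwise (· ≤ ·))
    (a b : ℕ) : ∃ s₁ s₂ s₃ w₁ w₂ w₃ : List ℕ, s = s₁ ++ s₂ ++ s₃ ∧
      w = w₁ ++ w₂ ++ w₃ ∧ s₁.Sublist w₁ ∧ s₂.Sublist w₂ ∧ s₃.Sublist w₃ ∧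
      (∀ x ∈ s₁, x < a) ∧ (∀ x ∈ s₂, a ≤ x ∧ x < b) ∧ (∀ x ∈ s₃, b ≤ x) := by
  have h₁ := eq_filter_lt_append_filter_le hp b
  have h₂ := eq_filter_lt_append_filter_le (hp.sublist (List.filter_sublist (p := (· < b)))) a
  rw [h₁] at hs
  obtain ⟨v, w₃, rfl, hv, hw₃⟩ := List.append_sublist_iff.1 hs
  rw [h₂] at hv
  obtain ⟨w₁, w₂, rfl, hw₁, hw₂⟩ := List.append_sublist_iff.1 hv
  refine ⟨_, _, _, w₁, w₂, w₃, by rw [← h₂]; exact h₁, rfl, hw₁, hw₂, hw₃, ?_, ?_, ?_⟩ <;>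
  · intro x hx
    simp at hx
    omega

theorem incBound_of_mem_Cent {u : ℕ} {w : List ℕ} (h : w ∈ Cent [u]) :
    IncBound w (w.count u) := by
  intro s hs hp
  obtain ⟨s₁, s₂, s₃, w₁, w₂, w₃, rfl, rfl, h₁, h₂, h₃, l₁, l₂, l₃⟩ :=
    exists_split_of_sublist hs hp u (u + 1)
  simp only [List.pairwise_append, List.mem_append] at hp
  have hs₂ : s₂.length ≤ w₂.count u := by
    have : s₂.count u = s₂.length := by
      rw [List.count_eq_length]
      intro b hb
      have := l₂ b hb
      omega
    exact this ▸ h₂.count_le u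
  have hrep : ∀ v : List ℕ, (List.replicate (v.count u) u).Sublist v :=
    fun v => List.replicate_sublist_iff.2 le_rfl
  have hle := length_le_count_of_le (s := s₁ ++ List.replicate ((w₂ ++ w₃).count u) u) h
    (by rw [List.append_assoc]; exact h₁.append (hrep _))
    (by
      simp only [List.pairwise_append, List.mem_replicate]
      refine ⟨hp.1.1, by simp [List.pairwise_replicate], ?_⟩
      rintro a ha b ⟨-, rfl⟩
      exact (l₁ a ha).le)
    (by
      simp only [List.mem_append, List.mem_replicate]
      rintro x (hx | ⟨-, rfl⟩)
      · exact (l₁ x hx).le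
      · exact le_rfl)
  have hge := length_le_count_of_ge (s := List.replicate ((w₁ ++ w₂).count u) u ++ s₃) h
    ((hrep _).append h₃)
    (by
      simp only [List.pairwise_append, List.mem_replicate]
      refine ⟨by simp [List.pairwise_replicate], hp.2.1, ?_⟩
      rintro a ⟨-, rfl⟩ b hb
      exact (Nat.le_succ _).trans (l₃ b hb))
    (by
      simp only [List.mem_append, List.mem_replicate]
      rintro x (⟨-, rfl⟩ | hx)
      · exact le_rfl
      · exact (Nat.le_succ _).trans (l₃ x hx))
  simp only [List.length_append, List.length_replicate, List.count_append] at hle hge ⊢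
  omega

/-- A letter moves right past the entries of a column that exceed a later larger letter. -/
theorem kEquiv_cons_append_cons {x y : ℕ} {C S : List ℕ} (hxy : x ≤ y)
    (hC : (C ++ y :: S).Pairwise (· > ·)) :
    KEquiv (x :: (C ++ y :: S)) (C ++ x :: y :: S) := by
  induction C with
  | nil => exact KEquiv.refl _
  | cons c C ih =>
    rw [List.cons_append, List.pairwise_cons] at hC
    refine KEquiv.trans ?_ ((ih hC.2).append_left [c])
    cases C with
    | nil =>
      exact Relation.EqvGen.rel _ _ (KStep.k1 [] S x y c hxy (hC.1 y (by simp)))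
    | cons d C =>
      have hd : y < d := by
        have := hC.2
        rw [List.cons_append, List.pairwise_cons] at this
        exact this.1 y (by simp)
      exact Relation.EqvGen.rel _ _
        (KStep.k1 [] (C ++ y :: S) x d c (hxy.trans hd.le) (hC.1 d (by simp)))

/-- A letter moves right past the entries of a column lying below a preceding smaller letter. -/
theorem kEquiv_cons_cons_append {x y : ℕ} {S : List ℕ} (hxy : x ≤ y)
    (hS : (x :: S).Pairwise (· > ·)) :
    KEquiv (x :: y :: S) (x :: S ++ [y]) := by
  induction S generalizing x with
  | nil => exact KEquiv.refl _
  | cons s S ih =>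
    rw [List.pairwise_cons] at hS
    have hs : s < x := hS.1 s (by simp)
    have hk : KEquiv (x :: s :: y :: S) (x :: y :: s :: S) :=
      Relation.EqvGen.rel _ _ (KStep.k2 [] S s x y hs hxy)
    exact hk.symm.trans ((ih (hs.le.trans hxy) hS.2).append_left [x])

/-- Column insertion: a letter bumps the smallest weakly larger entry of a column. -/
theorem kEquiv_column_bump {x y : ℕ} {C S : List ℕ} (hxy : x ≤ y)
    (hC : (C ++ y :: S).Pairwise (· > ·)) (hS : ∀ s ∈ S, s < x) :
    KEquiv (x :: (C ++ y :: S)) (C ++ x :: S ++ [y]) := by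
  refine (kEquiv_cons_append_cons hxy hC).trans ?_
  rw [List.append_assoc]
  refine KEquiv.append_left (kEquiv_cons_cons_append hxy ?_) C
  rw [List.pairwise_append, List.pairwise_cons] at hC
  exact List.pairwise_cons.2 ⟨hS, hC.2.1.2⟩

/-- Strictly decreasing columns whose minima form a weakly increasing sequence starting at or
above `lo`. -/
def IsColumnForm : ℕ → List (List ℕ) → Prop
  | _, [] => True
  | lo, C :: Cs => C.Pairwise (· > ·) ∧ ∃ a ∈ C, (∀ b ∈ C, a ≤ b) ∧ lo ≤ a ∧ IsColumnForm a Cs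

theorem IsColumnForm.mono {lo lo' : ℕ} (h : lo' ≤ lo) {Cs : List (List ℕ)}
    (hC : IsColumnForm lo Cs) : IsColumnForm lo' Cs := by
  cases Cs with
  | nil => trivial
  | cons C Cs =>
    obtain ⟨hp, a, ha, hmin, hlo, hCs⟩ := hC
    exact ⟨hp, a, ha, hmin, h.trans hlo, hCs⟩

theorem exists_bump_or_forall_lt (x : ℕ) {C : List ℕ} (hC : C.Pairwise (· > ·)) :
    (∀ c ∈ C, c < x) ∨ ∃ P y S, C = P ++ y :: S ∧ x ≤ y ∧ ∀ s ∈ S, s < x := by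
  induction C with
  | nil => simp
  | cons c C ih =>
    rw [List.pairwise_cons] at hC
    rcases ih hC.2 with h | ⟨P, y, S, rfl, hxy, hS⟩
    · by_cases hc : c < x
      · exact Or.inl (by simpa [hc] using h)
      · exact Or.inr ⟨[], c, C, rfl, not_lt.1 hc, h⟩
    · exact Or.inr ⟨c :: P, y, S, rfl, hxy, hS⟩

theorem IsColumnForm.exists_insert {lo x : ℕ} {Cs : List (List ℕ)} (hC : IsColumnForm lo Cs)
    (hx : lo ≤ x) : ∃ Cs', IsColumnForm lo Cs' ∧ KEquiv (x :: Cs.flatten) Cs'.flatten := by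
  induction Cs generalizing lo x with
  | nil => exact ⟨[[x]], by simpa [IsColumnForm] using hx, KEquiv.refl _⟩
  | cons C Cs ih =>
    obtain ⟨hp, a, ha, hmin, hlo, hCs⟩ := hC
    rcases exists_bump_or_forall_lt x hp with hlt | ⟨P, y, S, rfl, hxy, hS⟩
    · refine ⟨(x :: C) :: Cs, ⟨List.pairwise_cons.2 ⟨hlt, hp⟩, a, by simp [ha], ?_, hlo, hCs⟩,
        KEquiv.refl _⟩
      simpa using ⟨(hlt a ha).le, hmin⟩
    · have hay : a ≤ y := hmin y (by simp)
      obtain ⟨Cs', hCs', hK⟩ := ih (hCs.mono (min_le_left a x)) ((min_le_left a x).trans hay)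
      have hp' := hp
      simp only [List.pairwise_append, List.pairwise_cons, List.mem_cons] at hp'
      refine ⟨(P ++ x :: S) :: Cs', ⟨?_, min a x, ?_, ?_, le_min hlo hx, hCs'⟩, ?_⟩
      · simp only [List.pairwise_append, List.pairwise_cons, List.mem_cons]
        refine ⟨hp'.1, ⟨hS, hp'.2.1.2⟩, ?_⟩
        rintro c hc b (rfl | hb)
        · exact lt_of_le_of_lt hxy (hp'.2.2 c hc y (Or.inl rfl))
        · exact hp'.2.2 c hc b (Or.inr hb)
      · rcases le_or_gt x a with h | h
        · simp [min_eq_right h]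
        · rw [min_eq_left h.le]
          simp only [List.mem_append, List.mem_cons] at ha ⊢
          rcases ha with ha | rfl | ha
          · exact Or.inl ha
          · omega
          · exact Or.inr (Or.inr ha)
      · intro b hb
        simp only [List.mem_append, List.mem_cons] at hb
        rcases hb with hb | rfl | hb
        · exact (min_le_left _ _).trans (hmin b (by simp [hb]))
        · exact min_le_right _ _
        · exact (min_le_left _ _).trans (hmin b (by simp [hb]))
      · have h₁ := (kEquiv_column_bump hxy hp hS).append_right Cs.flatten
        have h₂ := hK.append_left (P ++ x :: S)
        simp only [List.flatten_cons]
        refine KEquiv.trans (by simpa using h₁) (by simpa using h₂)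

theorem exists_isColumnForm (w : List ℕ) :
    ∃ Cs, IsColumnForm 0 Cs ∧ KEquiv w Cs.flatten := by
  induction w with
  | nil => exact ⟨[], trivial, KEquiv.refl _⟩
  | cons x w ih =>
    obtain ⟨Cs, hCs, hK⟩ := ih
    obtain ⟨Cs', hCs', hK'⟩ := hCs.exists_insert (Nat.zero_le x)
    exact ⟨Cs', hCs', (hK.append_left [x]).trans hK'⟩

theorem IsColumnForm.exists_increasing {lo : ℕ} {Cs : List (List ℕ)} (h : IsColumnForm lo Cs) :
    ∃ s : List ℕ, s.Sublist Cs.flatten ∧ s.Pairwise (· ≤ ·) ∧ (∀ x ∈ s, lo ≤ x) ∧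
      s.length = Cs.length := by
  induction Cs generalizing lo with
  | nil => exact ⟨[], by simp⟩
  | cons C Cs ih =>
    obtain ⟨-, a, ha, -, hlo, hCs⟩ := h
    obtain ⟨s, hs, hp, hsa, hl⟩ := ih hCs
    refine ⟨a :: s, ?_, List.pairwise_cons.2 ⟨hsa, hp⟩, ?_, by simp [hl]⟩
    · exact (List.singleton_sublist.2 ha).append hs
    · simpa using ⟨hlo, fun x hx => hlo.trans (hsa x hx)⟩

theorem IsColumnForm.pairwise {lo : ℕ} {Cs : List (List ℕ)} (h : IsColumnForm lo Cs) :
    ∀ C ∈ Cs, C.Pairwise (· > ·) := by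
  induction Cs generalizing lo with
  | nil => simp
  | cons C Cs ih =>
    obtain ⟨hp, a, -, -, -, hCs⟩ := h
    simpa using ⟨hp, ih hCs⟩

theorem count_flatten_le {u : ℕ} {Cs : List (List ℕ)} (h : ∀ C ∈ Cs, C.Pairwise (· > ·)) :
    Cs.flatten.count u ≤ Cs.length := by
  induction Cs with
  | nil => simp
  | cons C Cs ih =>
    have h₁ : C.count u ≤ 1 :=
      List.nodup_iff_count_le_one.1 ((h C (by simp)).imp fun hab => hab.ne') u
    have := ih fun D hD => h D (by simp [hD])
    simp
    omega

theorem cons_flatten_kEquiv {u : ℕ} {Cs : List (List ℕ)} (h : ∀ C ∈ Cs, C.Pairwise (· > ·))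
    (hc : Cs.length ≤ Cs.flatten.count u) : KEquiv (u :: Cs.flatten) (Cs.flatten ++ [u]) := by
  induction Cs with
  | nil => exact KEquiv.refl _
  | cons C Cs ih =>
    have h₁ : C.count u ≤ 1 :=
      List.nodup_iff_count_le_one.1 ((h C (by simp)).imp fun hab => hab.ne') u
    have h' : ∀ D ∈ Cs, D.Pairwise (· > ·) := fun D hD => h D (by simp [hD])
    have h₂ := count_flatten_le (u := u) h'
    simp only [List.length_cons, List.flatten_cons, List.count_append] at hc
    have hu : u ∈ C := List.count_pos_iff.1 (by omega)
    obtain ⟨P, S, rfl⟩ := List.append_of_mem hu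
    have hp := h _ (List.mem_cons_self ..)
    have hS : ∀ s ∈ S, s < u := by
      rw [List.pairwise_append, List.pairwise_cons] at hp
      exact hp.2.1.1
    have k₁ := (kEquiv_column_bump le_rfl hp hS).append_right Cs.flatten
    have k₂ := (ih h' (by omega)).append_left (P ++ u :: S)
    simp only [List.flatten_cons]
    exact KEquiv.trans (by simpa using k₁) (by simpa using k₂)

/-- A word commutes with the letter `u` exactly when its multiplicity of `u` bounds the length of
all its weakly increasing subsequences. -/
theorem mem_Cent_singleton_iff {u : ℕ} {w : List ℕ} :
    w ∈ Cent [u] ↔ IncBound w (w.count u) := by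
  refine ⟨incBound_of_mem_Cent, fun h => ?_⟩
  obtain ⟨Cs, hCs, hK⟩ := exists_isColumnForm w
  obtain ⟨s, hs, hp, -, hl⟩ := hCs.exists_increasing
  obtain ⟨t, ht, htp, -, htl⟩ :=
    (hK.hasInc_iff (S := Set.univ)).2 ⟨s, hs, hp, by simp, rfl⟩
  have hc : Cs.length ≤ Cs.flatten.count u := by
    rw [← hl, ← htl, ← hK.perm.count_eq u]
    exact h t ht htp
  exact (hK.append_left [u]).trans
    ((cons_flatten_kEquiv hCs.pairwise hc).trans (hK.symm.append_right [u]))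

/-- Match each letter `i + 1` with a later `i` like parentheses, `d` letters `i + 1` being already
open, and raise the unmatched letters `i` to `i + 1`. -/
def raise (i : ℕ) : ℕ → List ℕ → List ℕ
  | _, [] => []
  | d, x :: w =>
    if x = i + 1 then x :: raise i (d + 1) w
    else if x = i then (if d = 0 then i + 1 else i) :: raise i (d - 1) w
    else x :: raise i d w

/-- The number of letters `i + 1` left unmatched after reading a word with `d` already open. -/
def depth (i : ℕ) : ℕ → List ℕ → ℕ
  | d, [] => d
  | d, x :: w =>
    if x = i + 1 then depth i (d + 1) w
    else if x = i then depth i (d - 1) w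
    else depth i d w

theorem length_raise (i d : ℕ) (w : List ℕ) : (raise i d w).length = w.length := by
  induction w generalizing d with
  | nil => rfl
  | cons x w ih => simp only [raise]; split_ifs <;> simp [ih]

theorem raise_append (i d : ℕ) (p q : List ℕ) :
    raise i d (p ++ q) = raise i d p ++ raise i (depth i d p) q := by
  induction p generalizing d with
  | nil => rfl
  | cons x w ih => simp only [raise, depth, List.cons_append]; split_ifs <;> simp [ih]

theorem exists_of_raise_eq_append {i d : ℕ} {w p q : List ℕ} (h : raise i d w = p ++ q) :
    ∃ p' q', w = p' ++ q' ∧ p = raise i d p' ∧ q = raise i (depth i d p') q' := by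
  have hw := List.take_append_drop p.length w
  rw [← hw, raise_append] at h
  have hl : (raise i d (w.take p.length)).length = p.length := by
    have h' := congrArg List.length h
    simp [length_raise] at h' ⊢
    omega
  obtain ⟨h₁, h₂⟩ := List.append_inj h hl
  exact ⟨_, _, hw.symm, h₁.symm, h₂.symm⟩

theorem mem_raise {i d x : ℕ} {w : List ℕ} (h : x ∈ raise i d w) :
    x ∈ w ∨ x = i + 1 := by
  induction w generalizing d with
  | nil => simp [raise] at h
  | cons y w ih =>
    simp only [raise] at h
    split_ifs at h <;> simp only [List.mem_cons] at h ⊢ <;> rcases h with h | h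
    all_goals first
      | omega
      | (have := ih h
         tauto)

theorem filter_raise (i d : ℕ) (w : List ℕ) :
    (raise i d w).filter (fun x => x ≠ i ∧ x ≠ i + 1) =
      w.filter (fun x => x ≠ i ∧ x ≠ i + 1) := by
  induction w generalizing d with
  | nil => rfl
  | cons x w ih => simp only [raise]; split_ifs <;> simp_all

theorem sublist_of_sublist_raise {i d : ℕ} {s w : List ℕ} (h : s.Sublist (raise i d w))
    (hs : ∀ x ∈ s, x ≠ i ∧ x ≠ i + 1) : s.Sublist w := by
  have h' := h.filter (fun x => x ≠ i ∧ x ≠ i + 1)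
  rw [filter_raise, List.filter_eq_self.2 (by simpa using hs)] at h'
  exact h'.trans List.filter_sublist

theorem count_raise_le (i d : ℕ) (w : List ℕ) : (raise i d w).count i ≤ w.count i := by
  induction w generalizing d with
  | nil => rfl
  | cons x w ih =>
    have h₀ := ih d
    have h₁ := ih (d + 1)
    have h₂ := ih (d - 1)
    simp only [raise]
    split_ifs <;> simp only [List.count_cons, beq_iff_eq] <;> split_ifs <;> omega

theorem count_succ_raise (i d : ℕ) (w : List ℕ) :
    (raise i d w).count (i + 1) + d = w.count i + depth i d w := by
  induction w generalizing d with
  | nil => simp [raise, depth]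
  | cons x w ih =>
    have h₀ := ih d
    have h₁ := ih (d + 1)
    have h₂ := ih (d - 1)
    simp only [raise, depth]
    split_ifs <;> simp only [List.count_cons, beq_iff_eq] <;> split_ifs <;> omega

theorem count_succ_raise_le_or (i d : ℕ) (w : List ℕ) :
    (raise i d w).count (i + 1) ≤ w.count (i + 1) ∨
      ∃ p q, w = p ++ q ∧ (raise i d w).count (i + 1) + d ≤ p.count i + q.count (i + 1) := by
  induction w generalizing d with
  | nil => simp [raise]
  | cons x w ih =>
    simp only [raise]
    split_ifs with h₁ h₂ h₃
    · subst h₁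
      rcases ih (d + 1) with h | ⟨p, q, rfl, h⟩
      · left; simpa using h
      · right; exact ⟨(i + 1) :: p, q, rfl, by simp; omega⟩
    · subst h₂ h₃
      right
      rcases ih 0 with h | ⟨p, q, rfl, h⟩
      · exact ⟨[x], w, rfl, by simp; omega⟩
      · exact ⟨x :: p, q, rfl, by simp at h ⊢; omega⟩
    · subst h₂
      rcases ih (d - 1) with h | ⟨p, q, rfl, h⟩
      · left; simpa [List.count_cons] using h
      · right; exact ⟨x :: p, q, rfl, by simp at h ⊢; omega⟩
    · rcases ih d with h | ⟨p, q, rfl, h⟩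
      · left; simpa [List.count_cons, h₁] using h
      · right; exact ⟨x :: p, q, rfl, by simpa [List.count_cons, h₁, h₂] using h⟩

theorem exists_split_count_raise (i d : ℕ) (v w : List ℕ) (e : ℕ) :
    ∃ p q, v ++ w = p ++ q ∧
      (raise i d v).count i + (raise i e w).count (i + 1) ≤ p.count i + q.count (i + 1) := by
  have hv := count_raise_le i d v
  rcases count_succ_raise_le_or i e w with h | ⟨p, q, rfl, h⟩
  · exact ⟨v, w, rfl, by omega⟩
  · exact ⟨v ++ p, q, by simp, by simp; omega⟩

theorem replicate_append_replicate_sublist (i : ℕ) (p q : List ℕ) :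
    (List.replicate (p.count i) i ++ List.replicate (q.count (i + 1)) (i + 1)).Sublist (p ++ q) :=
  (List.replicate_sublist_iff.2 le_rfl).append
    (List.replicate_sublist_iff.2 le_rfl)

theorem pairwise_replicate_append_replicate (i a b : ℕ) :
    (List.replicate a i ++ List.replicate b (i + 1)).Pairwise (· ≤ ·) := by
  simp only [List.pairwise_append, List.mem_replicate]
  refine ⟨by simp [List.pairwise_replicate], by simp [List.pairwise_replicate], ?_⟩
  rintro x ⟨-, rfl⟩ y ⟨-, rfl⟩
  omega

/-- Raising unmatched letters does not lengthen increasing subsequences. -/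
theorem IncBound.raise {i d k : ℕ} {w : List ℕ} (h : IncBound w k) :
    IncBound (raise i d w) k := by
  intro s hs hp
  obtain ⟨s₁, s₂, s₃, w₁, w₂, w₃, rfl, hw, h₁, h₂, h₃, l₁, l₂, l₃⟩ :=
    exists_split_of_sublist hs hp i (i + 2)
  obtain ⟨v, v₃, rfl, hv, rfl⟩ := exists_of_raise_eq_append hw
  obtain ⟨v₁, v₂, rfl, rfl, rfl⟩ := exists_of_raise_eq_append hv.symm
  simp only [List.pairwise_append, List.mem_append] at hp
  have k₁ := sublist_of_sublist_raise h₁ (fun x hx => by have := l₁ x hx; omega)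
  have k₃ := sublist_of_sublist_raise h₃ (fun x hx => by have := l₃ x hx; omega)
  obtain ⟨p, q, rfl, hpq⟩ : ∃ p q, v₂ = p ++ q ∧ s₂.length ≤ p.count i + q.count (i + 1) := by
    rw [eq_filter_lt_append_filter_le hp.1.2.1 (i + 1)] at h₂
    obtain ⟨r, t, hrt, hr, ht⟩ := List.append_sublist_iff.1 h₂
    obtain ⟨r', t', rfl, rfl, rfl⟩ := exists_of_raise_eq_append hrt
    obtain ⟨p, q, hpq, hle⟩ := exists_split_count_raise i (depth i d v₁) r' t'
      (depth i (depth i d v₁) r')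
    refine ⟨p, q, hpq, le_trans ?_ hle⟩
    have c₁ : (s₂.filter (· < i + 1)).count i = (s₂.filter (· < i + 1)).length := by
      rw [List.count_eq_length]
      intro b hb
      simp at hb
      have := l₂ b hb.1
      omega
    have c₂ : (s₂.filter (i + 1 ≤ ·)).count (i + 1) = (s₂.filter (i + 1 ≤ ·)).length := by
      rw [List.count_eq_length]
      intro b hb
      simp at hb
      have := l₂ b hb.1
      omega
    have e := congrArg List.length (eq_filter_lt_append_filter_le hp.1.2.1 (i + 1))
    rw [List.length_append] at e
    have := hr.count_le i
    have := ht.count_le (i + 1)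
    omega
  have hb := h (s₁ ++ (List.replicate (p.count i) i ++
      List.replicate (q.count (i + 1)) (i + 1)) ++ s₃)
    ((k₁.append (replicate_append_replicate_sublist i p q)).append k₃)
    (by
      simp only [List.pairwise_append (l₂ := s₃),
        List.pairwise_append (l₁ := s₁)]
      refine ⟨⟨hp.1.1, pairwise_replicate_append_replicate _ _ _, ?_⟩, hp.2.1, ?_⟩
      · intro x hx y hy
        have := l₁ x hx
        simp only [List.mem_append, List.mem_replicate] at hy
        omega
      · intro x hx y hy
        have := l₃ y hy
        simp only [List.mem_append, List.mem_replicate] at hx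
        rcases hx with hx | hx
        · have := l₁ x hx
          omega
        · omega)
  simp only [List.length_append, List.length_replicate] at hb ⊢
  omega

theorem depth_eq_or_exists_suffix (i d : ℕ) (w : List ℕ) :
    depth i d w + w.count i = d + w.count (i + 1) ∨
      ∃ p q, w = p ++ q ∧ depth i d w + q.count i = q.count (i + 1) := by
  induction w generalizing d with
  | nil => simp [depth]
  | cons x w ih =>
    have lift : ∀ e, (∃ p q, w = p ++ q ∧ depth i e w + q.count i = q.count (i + 1)) →
        ∃ p q, x :: w = p ++ q ∧ depth i e w + q.count i = q.count (i + 1) := by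
      rintro e ⟨p, q, hpq, h⟩
      exact ⟨x :: p, q, by simp [hpq], h⟩
    simp only [depth]
    split_ifs with h₁ h₂
    · refine (ih (d + 1)).imp (fun h => ?_) (lift _)
      simp [h₁]
      omega
    · rcases Nat.eq_zero_or_pos d with rfl | hd
      · right
        rcases ih 0 with h | h
        · exact ⟨[x], w, rfl, by simpa using h⟩
        · exact lift _ h
      · refine (ih (d - 1)).imp (fun h => ?_) (lift _)
        simp [h₂]
        omega
    · refine (ih d).imp (fun h => ?_) (lift _)
      simpa [List.count_cons, h₁, h₂] using h

theorem IncBound.depth_eq_zero {i : ℕ} {w : List ℕ} (h : IncBound w (w.count i)) :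
    depth i 0 w = 0 := by
  have key : ∀ p q, w = p ++ q → q.count (i + 1) ≤ q.count i := by
    rintro p q rfl
    have := h _ (replicate_append_replicate_sublist i p q)
      (pairwise_replicate_append_replicate _ _ _)
    simp at this
    exact this
  rcases depth_eq_or_exists_suffix i 0 w with h' | ⟨p, q, hpq, h'⟩
  · have := key [] w rfl
    omega
  · have := key p q hpq
    omega

theorem count_le_of_prefix_raise {i d : ℕ} {p w : List ℕ} (h : p <+: raise i d w) :
    p.count i ≤ p.count (i + 1) + d := by
  induction w generalizing d p with
  | nil => simp [raise] at h; simp [h]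
  | cons x w ih =>
    cases p with
    | nil => simp
    | cons y p =>
      simp only [raise] at h
      split_ifs at h with h₁ h₂ h₃ <;> rw [List.cons_prefix_cons] at h <;> obtain ⟨rfl, h⟩ := h
      all_goals
        have := ih h
        simp only [List.count_cons, beq_iff_eq]
        split_ifs <;> omega

theorem exists_prefix_raise {i d : ℕ} {w : List ℕ} (h : depth i d w = 0) :
    ∃ p, p <+: raise i d w ∧ p.count i = p.count (i + 1) + d := by
  induction w generalizing d with
  | nil => exact ⟨[], by simpa [depth] using h.symm⟩
  | cons x w ih =>
    rcases Nat.eq_zero_or_pos d with rfl | hd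
    · exact ⟨[], by simp⟩
    simp only [depth, raise] at h ⊢
    split_ifs at h ⊢ with h₁ h₂ h₃
    · obtain ⟨p, hp, hc⟩ := ih h
      exact ⟨x :: p, by simpa using hp, by simp [h₁]; omega⟩
    · omega
    · obtain ⟨p, hp, hc⟩ := ih h
      exact ⟨i :: p, by simpa using hp, by simp; omega⟩
    · obtain ⟨p, hp, hc⟩ := ih h
      exact ⟨x :: p, by simpa using hp, by simpa [List.count_cons, h₁, h₂] using hc⟩

theorem raise_zero_ne_raise_one {i : ℕ} {v w : List ℕ} (h : depth i 1 w = 0) :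
    raise i 0 v ≠ raise i 1 w := by
  intro he
  obtain ⟨p, hp, hc⟩ := exists_prefix_raise h
  have := count_le_of_prefix_raise (he ▸ hp)
  omega

theorem raise_injective {i d : ℕ} {v w : List ℕ} (hv : depth i d v = 0) (hw : depth i d w = 0)
    (h : raise i d v = raise i d w) : v = w := by
  induction v generalizing d w with
  | nil =>
    have := congrArg List.length h
    simp only [length_raise, List.length_nil] at this
    exact (List.length_eq_zero_iff.1 this.symm).symm
  | cons x v ih =>
    cases w with
    | nil => simpa [length_raise] using congrArg List.length h
    | cons y w =>
      simp only [raise, depth] at h hv hw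
      split_ifs at h hv hw with h₁ h₂ h₃ h₄ h₅ h₆ <;> rw [List.cons_eq_cons] at h <;>
        obtain ⟨hh, h⟩ := h
      all_goals first
        | omega
        | (have hxy : x = y := by omega
           rw [hxy, ih hv hw h])
        | (subst_vars
           exact absurd h (raise_zero_ne_raise_one ‹_›))
        | (subst_vars
           exact absurd h.symm (raise_zero_ne_raise_one ‹_›))

/-- The words counted by `c n m [u]`. -/
def centWords (n m u : ℕ) : Set (List ℕ) :=
  {w | w ∈ Cent [u] ∧ w.length = n ∧ ∀ x ∈ w, 1 ≤ x ∧ x ≤ m}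

theorem finite_centWords (n m u : ℕ) : (centWords n m u).Finite := by
  refine ((List.finite_length_eq (Fin (m + 1)) n).image (List.map Fin.val)).subset ?_
  rintro w ⟨-, hl, hw⟩
  refine ⟨w.map (Fin.ofNat (m + 1)), by simpa using hl, ?_⟩
  rw [List.map_map]
  refine (List.map_congr_left fun x hx => ?_).trans (List.map_id w)
  exact Nat.mod_eq_of_lt (Nat.lt_succ_of_le (hw x hx).2)

theorem c_le_c_succ {n m i : ℕ} (hi : i + 1 ≤ m) : c n m [i] ≤ c n m [i + 1] := by
  refine Set.ncard_le_ncard_of_injOn (raise i 0) ?_ ?_ (finite_centWords n m (i + 1))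
  · rintro w ⟨hw, hl, hm⟩
    have hb := mem_Cent_singleton_iff.1 hw
    refine ⟨mem_Cent_singleton_iff.2 ?_, by rw [length_raise, hl], ?_⟩
    · have := count_succ_raise i 0 w
      rw [hb.depth_eq_zero] at this
      simp only [add_zero] at this
      rw [this]
      exact hb.raise
    · intro x hx
      rcases mem_raise hx with h | rfl
      · exact hm x h
      · exact ⟨by omega, hi⟩
  · rintro v ⟨hv, -, -⟩ w ⟨hw, -, -⟩ h
    exact raise_injective (mem_Cent_singleton_iff.1 hv).depth_eq_zero
      (mem_Cent_singleton_iff.1 hw).depth_eq_zero h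

theorem c_mono {n m i j : ℕ} (hij : i ≤ j) (hj : j ≤ m) : c n m [i] ≤ c n m [j] := by
  induction j, hij using Nat.le_induction with
  | base => exact le_rfl
  | succ j _ ih => exact (ih (by omega)).trans (c_le_c_succ hj)

theorem map_sub_map_sub {m : ℕ} {w : List ℕ} (hw : ∀ x ∈ w, x ≤ m) :
    (w.map (m + 1 - ·)).map (m + 1 - ·) = w := by
  rw [List.map_map]
  refine (List.map_congr_left fun x hx => ?_).trans (List.map_id w)
  have := hw x hx
  simp only [Function.comp, id]
  omega

/-- Reversing and complementing a word exchanges the largest and the smallest letter. -/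
theorem c_top_le_c_one (n m : ℕ) : c n m [m] ≤ c n m [1] := by
  refine Set.ncard_le_ncard_of_injOn (fun w => (w.map (m + 1 - ·)).reverse) ?_ ?_
    (finite_centWords n m 1)
  · rintro w ⟨hw, hl, hm⟩
    have hb := mem_Cent_singleton_iff.1 hw
    refine ⟨mem_Cent_singleton_iff.2 ?_, by simpa using hl, ?_⟩
    · intro s hs hp
      have hs' := (List.reverse_sublist.2 hs).map (m + 1 - ·)
      rw [List.reverse_reverse, map_sub_map_sub fun x hx => (hm x hx).2] at hs'
      have hle := hb _ hs' (by
        rw [List.pairwise_map, List.pairwise_reverse]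
        exact hp.imp fun h => by omega)
      have hc := List.count_le_count_map (f := (m + 1 - ·)) (x := m) (l := w)
      simp only [List.length_map, List.length_reverse, List.count_reverse,
        Nat.add_sub_cancel_left] at hle hc ⊢
      exact hle.trans hc
    · simp only [List.mem_reverse, List.mem_map]
      rintro x ⟨y, hy, rfl⟩
      have := hm y hy
      omega
  · rintro v ⟨-, -, hv⟩ w ⟨-, -, hw⟩ h
    have h' := congrArg (List.map (m + 1 - ·)) (List.reverse_injective h)
    rwa [map_sub_map_sub fun x hx => (hv x hx).2, map_sub_map_sub fun x hx => (hw x hx).2] at h'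

theorem eq_nil_of_mem_Cent {u : ℕ} {w : List ℕ} (h : w ∈ Cent [u]) (hu : u ∉ w) : w = [] := by
  cases w with
  | nil => rfl
  | cons x w =>
    have := mem_Cent_singleton_iff.1 h [x] (by simp) (by simp)
    rw [List.count_eq_zero_of_not_mem hu] at this
    simp at this

end Plactic

open Plactic in
theorem stmt_14 (u n m : ℕ) (hu : 0 < u) :
    (u ≤ m → c n m [u] = c n m [1]) ∧
    (m < u → c n m [u] = if n = 0 then 1 else 0) := by
  refine ⟨fun hm => le_antisymm ((c_mono hm le_rfl).trans (c_top_le_c_one n m)) (c_mono hu hm),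
    fun hm => ?_⟩
  have hnil : ∀ w ∈ centWords n m u, w = [] := fun w hw =>
    eq_nil_of_mem_Cent hw.1 fun h => absurd (hw.2.2 u h).2 (by omega)
  change (centWords n m u).ncard = _
  split_ifs with hn
  · subst hn
    have : centWords 0 m u = {[]} := Set.eq_singleton_iff_unique_mem.2
      ⟨⟨KEquiv.refl _, rfl, by simp⟩, hnil⟩
    rw [this, Set.ncard_singleton]
  · have : centWords n m u = ∅ := Set.eq_empty_of_forall_notMem fun w hw =>
      hn (by rw [← hw.2.1, hnil w hw, List.length_nil])
    rw [this, Set.ncard_empty]
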